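/- Let h ∈ K̄[z] be nonzero with a part-square decomposition h = q² + ρ, and let α, α′ ∈ K̄ and β, β′ ∈ K̄× satisfy v(β) = v(β′) and v(α − α′) ≥ v(β). Then the induced part-square decomposition h(βz + α) = (q(βz + α))² + ρ(βz + α) is good if and only if the induced part-square decomposition h(β′z + α′) = (q(β′z + α′))² + ρ(β′z + α′) is good. (Hence whether the induced decomposition is good depends only on the disc D_{α,v(β)} = {x ∈ K̄ : v(x − α) ≥ v(β)}.) -/

import Mathlib

open Polynomial

/-- The *Gauss valuation* of a polynomial: the minimum of the valuations of its
coefficients (with value `⊤ = +∞` for the zero polynomial). -/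
noncomputable def gaussVal {Kbar : Type*} [Field Kbar]
    (v : AddValuation Kbar (WithTop ℚ)) (h : Kbar[X]) : WithTop ℚ :=
  h.support.inf fun i => v (h.coeff i)

/-- `h = q² + ρ` is a *part-square decomposition* of `h`:
`deg q ≤ ⌈deg h / 2⌉`, encoded as `2 * deg q ≤ deg h + 1` (`q = 0` is allowed). -/
def IsPSD {Kbar : Type*} [Field Kbar] (h q ρ : Kbar[X]) : Prop :=
  h = q ^ 2 + ρ ∧ 2 * q.natDegree ≤ h.natDegree + 1

/-- A part-square decomposition `h = q² + ρ` is *good* if either `v ρ − v h ≥ 2 v 2`,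
or `v ρ − v h < 2 v 2` and no part-square decomposition of `h` has strictly larger
Gauss valuation of its remainder. -/
def IsGoodPSD {Kbar : Type*} [Field Kbar] (v : AddValuation Kbar (WithTop ℚ))
    (h q ρ : Kbar[X]) : Prop :=
  IsPSD h q ρ ∧
    (gaussVal v h + (v 2 + v 2) ≤ gaussVal v ρ ∨
      (gaussVal v ρ < gaussVal v h + (v 2 + v 2) ∧
        ∀ q' ρ' : Kbar[X], IsPSD h q' ρ' → gaussVal v ρ' ≤ gaussVal v ρ))


lemma le_gaussVal_iff {F : Type*} [Field F] (v : AddValuation F (WithTop ℚ)) (p : F[X])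
    (m : WithTop ℚ) : m ≤ gaussVal v p ↔ ∀ i, m ≤ v (p.coeff i) := by
  unfold gaussVal
  rw [Finset.le_inf_iff]
  constructor
  · intro H i
    by_cases hi : p.coeff i = 0
    · rw [hi, AddValuation.map_zero]; exact le_top
    · exact H i (mem_support_iff.2 hi)
  · intro H i _
    exact H i

lemma gauss_mul {F : Type*} [Field F] (v : AddValuation F (WithTop ℚ)) (p r : F[X])
    (m : WithTop ℚ) (hp : ∀ i, m ≤ v (p.coeff i)) (hr : ∀ i, 0 ≤ v (r.coeff i)) :
    ∀ i, m ≤ v ((p * r).coeff i) := by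
  intro i
  rw [coeff_mul]
  refine AddValuation.map_le_sum v ?_
  intro x _
  rw [AddValuation.map_mul]
  calc m = m + 0 := (add_zero m).symm
    _ ≤ _ := add_le_add (hp _) (hr _)

lemma gauss_le_comp {F : Type*} [Field F] (v : AddValuation F (WithTop ℚ)) (p L : F[X])
    (hL : ∀ i, 0 ≤ v (L.coeff i)) : gaussVal v p ≤ gaussVal v (p.comp L) := by
  rw [le_gaussVal_iff]
  have hp := (le_gaussVal_iff v p _).1 le_rfl
  have hpow : ∀ n i, 0 ≤ v ((L ^ n).coeff i) := by
    intro n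
    induction n with
    | zero =>
      intro i
      rw [pow_zero, coeff_one]
      split_ifs <;> simp
    | succ n ih => rw [pow_succ]; exact gauss_mul v _ _ _ ih hL
  intro i
  rw [comp, eval₂_eq_sum, Polynomial.sum, finset_sum_coeff]
  refine AddValuation.map_le_sum v ?_
  intro n _
  refine gauss_mul v _ _ _ ?_ (hpow n) i
  intro j
  rw [coeff_C]
  split_ifs
  · exact hp n
  · simp

lemma coeff_lin {F : Type*} [Field F] (v : AddValuation F (WithTop ℚ)) (c d : F)
    (hc : 0 ≤ v c) (hd : 0 ≤ v d) : ∀ i, 0 ≤ v ((C c * X + C d).coeff i) := by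
  intro i
  rcases i with _ | _ | i
  · simpa using hd
  · simpa [coeff_C] using hc
  · simp [coeff_C, coeff_X]

lemma lin_comp_lin {F : Type*} [Field F] (a b c d : F) :
    (C a * X + C b).comp (C c * X + C d) = C (a * c) * X + C (a * d + b) := by
  simp; ring

lemma isPSD_comp {F : Type*} [Field F] {h q ρ : F[X]} (H : IsPSD h q ρ) (c d : F)
    (hc : c ≠ 0) :
    IsPSD (h.comp (C c * X + C d)) (q.comp (C c * X + C d)) (ρ.comp (C c * X + C d)) := by
  refine ⟨?_, ?_⟩
  · conv_lhs => rw [H.1]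
    simp
  · rw [natDegree_comp, natDegree_comp, natDegree_linear hc, mul_one, mul_one]
    exact H.2

lemma good_comp {F : Type*} [Field F] (v : AddValuation F (WithTop ℚ)) {h q ρ : F[X]}
    (H : IsGoodPSD v h q ρ) (c d : F) (hc : c ≠ 0) (hvc : v c = 0) (hd : 0 ≤ v d) :
    IsGoodPSD v (h.comp (C c * X + C d)) (q.comp (C c * X + C d))
      (ρ.comp (C c * X + C d)) := by
  have hvi : v c⁻¹ = 0 := by
    have h1 : v (c * c⁻¹) = 0 := by rw [mul_inv_cancel₀ hc, AddValuation.map_one]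
    rwa [AddValuation.map_mul, hvc, zero_add] at h1
  have hinv : ∀ p : F[X], (p.comp (C c * X + C d)).comp (C c⁻¹ * X + C (-(c⁻¹ * d))) = p := by
    intro p
    rw [comp_assoc, lin_comp_lin, mul_inv_cancel₀ hc]
    have : c * -(c⁻¹ * d) + d = 0 := by field_simp; ring
    rw [this]; simp
  have hd' : 0 ≤ v (-(c⁻¹ * d)) := by
    rw [AddValuation.map_neg, AddValuation.map_mul, hvi, zero_add]; exact hd
  have hg : ∀ p : F[X], gaussVal v (p.comp (C c * X + C d)) = gaussVal v p := by
    intro p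
    apply le_antisymm
    · have := gauss_le_comp v (p.comp (C c * X + C d)) _ (coeff_lin v _ _ hvi.ge hd')
      rwa [hinv] at this
    · exact gauss_le_comp v p _ (coeff_lin v _ _ hvc.ge hd)
  refine ⟨isPSD_comp H.1 c d hc, ?_⟩
  rw [hg, hg]
  refine H.2.imp id ?_
  rintro ⟨h1, h2⟩
  refine ⟨h1, fun q' ρ' H' => ?_⟩
  have H2 := isPSD_comp H' c⁻¹ (-(c⁻¹ * d)) (inv_ne_zero hc)
  rw [hinv] at H2
  exact (gauss_le_comp v ρ' _ (coeff_lin v _ _ hvi.ge hd')).trans (h2 _ _ H2)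

lemma good_imp {F : Type*} [Field F] (v : AddValuation F (WithTop ℚ)) (h q ρ : F[X])
    (α α' β β' : F) (hβ : β ≠ 0) (hβ' : β' ≠ 0)
    (hvβ : v β = v β') (hαα' : v β ≤ v (α - α'))
    (H : IsGoodPSD v (h.comp (C β * X + C α)) (q.comp (C β * X + C α))
        (ρ.comp (C β * X + C α))) :
      IsGoodPSD v (h.comp (C β' * X + C α')) (q.comp (C β' * X + C α'))
        (ρ.comp (C β' * X + C α')) := by
  have htop : v β ≠ ⊤ := by rwa [Ne, AddValuation.top_iff]
  have e1 : β * (β' / β) = β' := by field_simp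
  have e2 : β * ((α' - α) / β) = α' - α := by field_simp
  have h1 : v (β' / β) = 0 := by
    have := congrArg v e1
    rw [AddValuation.map_mul, ← hvβ] at this
    exact (WithTop.add_left_inj htop).1 (this.trans (add_zero _).symm)
  have h2 : 0 ≤ v ((α' - α) / β) := by
    have := congrArg v e2
    rw [AddValuation.map_mul] at this
    rw [AddValuation.map_sub_swap, ← this] at hαα'
    exact (WithTop.add_le_add_iff_left htop).1 ((add_zero _).le.trans hαα')
  have := good_comp v H (β' / β) ((α' - α) / β) (div_ne_zero hβ' hβ) h1 h2
  simpa only [comp_assoc, lin_comp_lin, e1, e2, sub_add_cancel] using this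

/-- Whether the part-square decomposition of `h(βz + α)` induced from a
part-square decomposition `h = q² + ρ` is good depends only on the disc `D_{α, v β}`. -/
theorem stmt7 {Kbar : Type*} [Field Kbar] [IsAlgClosed Kbar]
    (v : AddValuation Kbar (WithTop ℚ)) (hchar : (2 : Kbar) ≠ 0)
    (h q ρ : Kbar[X]) (hh : h ≠ 0) (hpsd : IsPSD h q ρ)
    (α α' β β' : Kbar) (hβ : β ≠ 0) (hβ' : β' ≠ 0)
    (hvβ : v β = v β') (hαα' : v β ≤ v (α - α')) :
    IsGoodPSD v (h.comp (C β * X + C α)) (q.comp (C β * X + C α))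
        (ρ.comp (C β * X + C α)) ↔
      IsGoodPSD v (h.comp (C β' * X + C α')) (q.comp (C β' * X + C α'))
        (ρ.comp (C β' * X + C α')) := by
  constructor
  · exact good_imp v h q ρ α α' β β' hβ hβ' hvβ hαα'
  · refine good_imp v h q ρ α' α β' β hβ' hβ hvβ.symm ?_
    rw [← hvβ, AddValuation.map_sub_swap]; exact hαα'
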